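/- arXiv:1905.07765 — 2 statements merged into one kernel-verified Lean document; each statement's English description precedes it below -/
import Mathlib

section
/- Let N_n(s) = max of n i.i.d. discrete Pareto II random variables with parameter s > 0, so that P(N_n(s) ≤ k) = (k/(s+k))^n. Then for 0 < p < 1, E[(N_n(s))^{-p}] = Γ(p+1)/(s^p n^p) + (s-1) p Γ(p+2)/(2 s^{p+1} n^{p+1}) + R_n with |R_n| ≤ c(p,s) n^{-2} for some constant c(p,s) independent of n. -/
open MeasureTheory Real

noncomputable def pg (a lam x : ℝ) : ℝ := x ^ (-a) * Real.exp (-(lam / x))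

lemma pg_nonneg {a lam x : ℝ} (hx : 0 < x) : 0 ≤ pg a lam x := by
  unfold pg; positivity

lemma pow_mul_exp_neg_le (m : ℕ) {u : ℝ} (hu : 0 ≤ u) :
    u ^ m * Real.exp (-u) ≤ (m.factorial : ℝ) := by
  have h := Real.pow_div_factorial_le_exp (x := u) hu m
  rw [div_le_iff₀ (by positivity)] at h
  rw [Real.exp_neg, ← div_eq_mul_inv, div_le_iff₀ (Real.exp_pos _)]
  linarith

lemma pg_decay (M : ℕ) (b : ℝ) {lam x : ℝ} (hl : 0 < lam) (hx : 0 < x) :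
    lam ^ M * pg b lam x ≤ (M.factorial : ℝ) * x ^ ((M : ℝ) - b) := by
  have h := pow_mul_exp_neg_le M (u := lam / x) (by positivity)
  have e : x ^ ((M : ℝ) - b) = x ^ M * x ^ (-b) := by
    rw [sub_eq_add_neg, Real.rpow_add hx, Real.rpow_natCast]
  have e2 : lam ^ M * pg b lam x = ((lam / x) ^ M * Real.exp (-(lam / x))) * (x ^ M * x ^ (-b)) := by
    unfold pg; rw [div_pow]; field_simp
  rw [e, e2]
  gcongr

lemma pg_hasDerivAt (a lam : ℝ) {x : ℝ} (hx : 0 < x) :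
    HasDerivAt (pg a lam) (-a * pg (a + 1) lam x + lam * pg (a + 2) lam x) x := by
  have h1 : HasDerivAt (fun y : ℝ => y ^ (-a)) (-a * x ^ (-a - 1)) x :=
    Real.hasDerivAt_rpow_const (Or.inl hx.ne')
  have h2 : HasDerivAt (fun y : ℝ => -(lam / y)) (lam / x ^ 2) x := by
    have := ((hasDerivAt_inv hx.ne').const_mul lam).neg
    refine HasDerivAt.congr_deriv this ?_
    field_simp
  have h3 := h1.mul h2.exp
  refine HasDerivAt.congr_deriv h3 ?_
  unfold pg
  have e1 : x ^ (-(a + 1)) = x ^ (-a - 1) := by congr 1; ring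
  have e2 : x ^ (-(a + 2)) = x ^ (-a) / x ^ 2 := by
    rw [show -(a+2) = -a - (2:ℕ) by push_cast; ring, Real.rpow_sub_natCast hx.ne']
  rw [e1, e2]
  ring

lemma pg_continuousOn (a lam : ℝ) : ContinuousOn (pg a lam) (Set.Ioi 0) :=
  fun _ hx => (pg_hasDerivAt a lam hx).continuousAt.continuousWithinAt

lemma trap_unit (f f' fdd : ℝ → ℝ) (c M : ℝ)
    (hf : ∀ x ∈ Set.Icc c (c+1), HasDerivAt f (f' x) x)
    (hf' : ∀ x ∈ Set.Icc c (c+1), HasDerivAt f' (fdd x) x)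
    (hM : ∀ x ∈ Set.Icc c (c+1), |fdd x| ≤ M) :
    |(∫ x in c..(c+1), f x) - (f c + f (c+1)) / 2| ≤ M := by
  have hu : Set.uIcc c (c+1) = Set.Icc c (c+1) := Set.uIcc_of_le (by linarith)
  have hc' : ContinuousOn f' (Set.uIcc c (c+1)) := by
    rw [hu]; exact fun x hx => (hf' x hx).continuousAt.continuousWithinAt
  have hi' : IntervalIntegrable f' volume c (c+1) := hc'.intervalIntegrable
  have hbp := intervalIntegral.integral_mul_deriv_eq_deriv_mul (a := c) (b := c+1)
    (u := fun x => x - (c + 1/2)) (v := f) (u' := fun _ => 1) (v' := f')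
    (fun x _ => (hasDerivAt_id x).sub_const _) (by rw [hu]; exact hf)
    (by simp) hi'
  have hz : ∫ x in c..(c+1), (x - (c+1/2)) * f' c = 0 := by
    rw [intervalIntegral.integral_mul_const, intervalIntegral.integral_sub (by simp) (by simp)]
    simp; left; ring
  have hd : ∫ x in c..(c+1), (x - (c+1/2)) * (f' x - f' c) =
      ∫ x in c..(c+1), (x - (c+1/2)) * f' x := by
    rw [← sub_zero (∫ x in c..(c+1), (x - (c+1/2)) * f' x), ← hz,
      ← intervalIntegral.integral_sub]
    · congr 1; ext x; ring
    · exact (ContinuousOn.mul (by fun_prop) hc').intervalIntegrable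
    · exact (Continuous.intervalIntegrable (by fun_prop) _ _)
  have hb : ‖∫ x in c..(c+1), (x - (c+1/2)) * (f' x - f' c)‖ ≤ M * |c + 1 - c| := by
    apply intervalIntegral.norm_integral_le_of_norm_le_const
    intro x hx
    rw [Set.uIoc_of_le (by linarith)] at hx
    have hx' : x ∈ Set.Icc c (c+1) := ⟨hx.1.le, hx.2⟩
    have hcc : c ∈ Set.Icc c (c+1) := ⟨le_rfl, by linarith⟩
    have h1 := (convex_Icc c (c+1)).norm_image_sub_le_of_norm_hasDerivWithin_le
      (f := f') (f' := fdd) (C := M)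
      (fun y hy => (hf' y hy).hasDerivWithinAt) hM hcc hx'
    have hM0 : 0 ≤ M := (abs_nonneg _).trans (hM c hcc)
    rw [norm_mul]
    have h2 : ‖x - (c+1/2)‖ ≤ 1 := by rw [Real.norm_eq_abs, abs_le]; constructor <;> linarith [hx.1, hx.2]
    have h3 : ‖x - c‖ ≤ 1 := by rw [Real.norm_eq_abs, abs_le]; constructor <;> linarith [hx.1, hx.2]
    have h4 : ‖f' x - f' c‖ ≤ M := h1.trans (by nlinarith)
    nlinarith [norm_nonneg (x - (c+1/2)), norm_nonneg (f' x - f' c)]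
  rw [hd, hbp] at hb
  simp only [one_mul, Real.norm_eq_abs, add_sub_cancel_left, abs_one, mul_one] at hb
  rw [abs_sub_comm]
  convert hb using 2
  ring

lemma taylor_unit (f f' fdd fddd : ℝ → ℝ) (c M : ℝ)
    (hf : ∀ x ∈ Set.Icc c (c+1), HasDerivAt f (f' x) x)
    (hf' : ∀ x ∈ Set.Icc c (c+1), HasDerivAt f' (fdd x) x)
    (hff : ∀ x ∈ Set.Icc c (c+1), HasDerivAt fdd (fddd x) x)
    (hM : ∀ x ∈ Set.Icc c (c+1), |fddd x| ≤ M) :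
    |f (c+1) - f c - f' c - fdd c / 2| ≤ M := by
  have hcc : c ∈ Set.Icc c (c+1) := ⟨le_rfl, by linarith⟩
  have hM0 : 0 ≤ M := (abs_nonneg _).trans (hM c hcc)
  have key : ∀ (h h' : ℝ → ℝ), (∀ x ∈ Set.Icc c (c+1), HasDerivAt h (h' x) x) →
      (∀ x ∈ Set.Icc c (c+1), |h' x| ≤ M) → ∀ x ∈ Set.Icc c (c+1), |h x - h c| ≤ M := by
    intro h h' hd hb x hx
    have h1 := (convex_Icc c (c+1)).norm_image_sub_le_of_norm_hasDerivWithin_le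
      (f := h) (f' := h') (C := M)
      (fun y hy => (hd y hy).hasDerivWithinAt) hb hcc hx
    have h3 : ‖x - c‖ ≤ 1 := by rw [Real.norm_eq_abs, abs_le]; constructor <;> linarith [hx.1, hx.2]
    exact h1.trans (by nlinarith)
  have s1 := key fdd fddd hff hM
  have s2 := key (fun x => f' x - fdd c * x) (fun x => fdd x - fdd c)
    (fun x hx => by
      refine HasDerivAt.congr_deriv ((hf' x hx).sub ((hasDerivAt_id x).const_mul (fdd c))) ?_
      ring) s1
  have s3 := key (fun x => f x - (f' c * x + fdd c * ((x - c)^2 / 2)))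
    (fun x => f' x - fdd c * x - (f' c - fdd c * c)) (fun x hx => by
      have e : HasDerivAt (fun x : ℝ => (x - c)^2/2) (x - c) x := by
        have := (((hasDerivAt_id x).sub_const c).pow 2).div_const 2
        refine HasDerivAt.congr_deriv this ?_
        simp
      have := (hf x hx).sub (((hasDerivAt_id x).const_mul (f' c)).add (e.const_mul (fdd c)))
      refine HasDerivAt.congr_deriv this ?_
      ring) s2
  have := s3 (c+1) ⟨by linarith, le_rfl⟩
  convert this using 2
  ring

lemma pg_integrable {a lam : ℝ} (ha : 1 < a) (hl : 0 < lam) :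
    IntegrableOn (pg a lam) (Set.Ioi 0) ∧
    ∫ x in Set.Ioi 0, pg a lam x = Real.Gamma (a - 1) * lam ^ (1 - a) := by
  have key := Real.integral_rpow_mul_exp_neg_mul_Ioi (a := a - 1) (r := lam) (by linarith) hl
  have hg : 0 < Real.Gamma (a-1) := Real.Gamma_pos_of_pos (by linarith)
  have hint : IntegrableOn (fun t : ℝ => t ^ (a - 1 - 1) * Real.exp (-(lam * t))) (Set.Ioi 0) :=
    .of_integral_ne_zero (by rw [key]; positivity)
  have e : ∀ x ∈ Set.Ioi (0:ℝ), (|(-1:ℝ)| * x ^ ((-1:ℝ) - 1)) •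
      ((x ^ (-1:ℝ)) ^ (a - 1 - 1) * Real.exp (-(lam * x ^ (-1:ℝ)))) = pg a lam x := by
    intro x hx
    have hx : 0 < x := hx
    rw [← Real.rpow_mul hx.le, smul_eq_mul, abs_neg, abs_one, one_mul, ← mul_assoc,
      ← Real.rpow_add hx, Real.rpow_neg_one]
    unfold pg
    congr 2
    ring
  constructor
  · have := (integrableOn_Ioi_comp_rpow_iff _ (p := -1) (by norm_num)).2 hint
    exact this.congr_fun e measurableSet_Ioi
  · rw [← setIntegral_congr_fun measurableSet_Ioi e,
      integral_comp_rpow_Ioi (fun t : ℝ => t ^ (a - 1 - 1) * Real.exp (-(lam * t))) (by norm_num), key,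
      mul_comm, one_div, Real.inv_rpow hl.le, ← Real.rpow_neg hl.le]
    congr 2; ring

lemma summable_shift {b : ℝ} (hb : b < -1) : Summable (fun k : ℕ => ((k:ℝ)+1) ^ b) := by
  have := (Real.summable_one_div_nat_add_rpow 1 (-b)).2 (by linarith)
  refine this.congr fun k => ?_
  rw [abs_of_pos (by positivity), Real.rpow_neg (by positivity)]; simp

lemma pg_summable {a lam : ℝ} (ha : 1 < a) (hl : 0 < lam) :
    Summable (fun k : ℕ => pg a lam ((k:ℝ)+1)) := by
  refine Summable.of_nonneg_of_le (fun k => pg_nonneg (by positivity)) (fun k => ?_)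
    (summable_shift (b := -a) (by linarith))
  have := pg_decay 0 a hl (x := (k:ℝ)+1) (by positivity)
  simpa using this

lemma pg_sum {a lam0 : ℝ} (ha : 1 < a) (m : ℕ) (hm : (m:ℝ) < a + 1) (hl0 : 0 < lam0) :
    ∃ C : ℝ, ∀ lam, lam0 ≤ lam →
      lam ^ m * |(∑' k : ℕ, pg a lam ((k:ℝ)+1)) - Real.Gamma (a - 1) * lam ^ (1 - a)| ≤ C := by
  obtain ⟨j, hj⟩ := exists_nat_ge a
  set D : ℝ := a * (a+1) * m.factorial + (2*a+2) * (m+1).factorial + (m+2).factorial with hD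
  have hD0 : 0 ≤ D := by positivity
  set S := ∑' k : ℕ, ((k:ℝ)+1) ^ ((m:ℝ) - a - 2)
  have hS := summable_shift (b := (m:ℝ) - a - 2) (by linarith)
  refine ⟨D * S + m.factorial / 2 + (m+j).factorial / lam0 ^ j, fun lam hlam => ?_⟩
  have hl : 0 < lam := hl0.trans_le hlam
  obtain ⟨hint, hval⟩ := pg_integrable ha hl
  have hsum := pg_summable ha hl
  -- cellwise
  have cell : ∀ k : ℕ, lam ^ m * |(∫ x in ((k:ℝ)+1)..((k:ℝ)+1+1), pg a lam x) -
      (pg a lam ((k:ℝ)+1) + pg a lam ((k:ℝ)+1+1))/2| ≤ D * ((k:ℝ)+1) ^ ((m:ℝ) - a - 2) := by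
    intro k
    have := trap_unit (pg a lam) (fun x => -a * pg (a + 1) lam x + lam * pg (a + 2) lam x)
      (fun x => -a * (-(a+1) * pg (a + 1+1) lam x + lam * pg (a + 1+2) lam x)
        + lam * (-(a+2) * pg (a + 2+1) lam x + lam * pg (a + 2+2) lam x)) ((k:ℝ)+1)
      (D * ((k:ℝ)+1) ^ ((m:ℝ) - a - 2) / lam ^ m) 
      (fun x hx => pg_hasDerivAt a lam (lt_of_lt_of_le (by positivity) hx.1))
      (fun x hx => ((pg_hasDerivAt (a+1) lam (lt_of_lt_of_le (by positivity) hx.1)).const_mul _).add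
        ((pg_hasDerivAt (a+2) lam (lt_of_lt_of_le (by positivity) hx.1)).const_mul _))
      (fun x hx => by
        have hx0 : 0 < x := lt_of_lt_of_le (by positivity) hx.1
        rw [le_div_iff₀ (by positivity)]
        have b1 := pg_decay m (a+1+1) hl hx0
        have b2 := pg_decay (m+1) (a+1+2) hl hx0
        have b2' := pg_decay (m+1) (a+2+1) hl hx0
        have b3 := pg_decay (m+2) (a+2+2) hl hx0
        have r1 : (m:ℝ) - (a+1+1) = (m:ℝ) - a - 2 := by ring
        have r2 : ((m+1:ℕ):ℝ) - (a+1+2) = (m:ℝ) - a - 2 := by push_cast; ring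
        have r2' : ((m+1:ℕ):ℝ) - (a+2+1) = (m:ℝ) - a - 2 := by push_cast; ring
        have r3 : ((m+2:ℕ):ℝ) - (a+2+2) = (m:ℝ) - a - 2 := by push_cast; ring
        rw [r1] at b1; rw [r2] at b2; rw [r2'] at b2'; rw [r3] at b3
        have mono : x ^ ((m:ℝ) - a - 2) ≤ ((k:ℝ)+1) ^ ((m:ℝ) - a - 2) :=
          Real.rpow_le_rpow_of_nonpos (by positivity) hx.1 (by linarith)
        have n1 : 0 ≤ pg (a+1+1) lam x := pg_nonneg hx0
        have n2 : 0 ≤ pg (a+1+2) lam x := pg_nonneg hx0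
        have n2' : 0 ≤ pg (a+2+1) lam x := pg_nonneg hx0
        have n3 : 0 ≤ pg (a+2+2) lam x := pg_nonneg hx0
        have habs : |(-a * (-(a+1) * pg (a + 1+1) lam x + lam * pg (a + 1+2) lam x)
          + lam * (-(a+2) * pg (a + 2+1) lam x + lam * pg (a + 2+2) lam x))| ≤
            a * (a+1) * pg (a+1+1) lam x + a * (lam * pg (a+1+2) lam x) +
            (a+2) * (lam * pg (a+2+1) lam x) + lam^2 * pg (a+2+2) lam x := by
          have q1 : 0 ≤ a * (a+1) * pg (a+1+1) lam x := by positivity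
          have q2 : 0 ≤ a * (lam * pg (a+1+2) lam x) := by positivity
          have q3 : 0 ≤ (a+2) * (lam * pg (a+2+1) lam x) := by positivity
          have q4 : 0 ≤ lam^2 * pg (a+2+2) lam x := by positivity
          rw [abs_le]; constructor <;> nlinarith
        calc _ ≤ (a * (a+1) * pg (a+1+1) lam x + a * (lam * pg (a+1+2) lam x) +
            (a+2) * (lam * pg (a+2+1) lam x) + lam^2 * pg (a+2+2) lam x) * lam ^ m := by
              gcongr
          _ = a * (a+1) * (lam^m * pg (a+1+1) lam x) + a * (lam^(m+1) * pg (a+1+2) lam x) +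
            (a+2) * (lam^(m+1) * pg (a+2+1) lam x) + lam^(m+2) * pg (a+2+2) lam x := by ring
          _ ≤ a * (a+1) * (m.factorial * x ^ ((m:ℝ) - a - 2))
            + a * ((m+1).factorial * x ^ ((m:ℝ) - a - 2)) +
            (a+2) * ((m+1).factorial * x ^ ((m:ℝ) - a - 2))
              + (m+2).factorial * x ^ ((m:ℝ) - a - 2) := by gcongr
          _ = D * x ^ ((m:ℝ) - a - 2) := by rw [hD]; ring
          _ ≤ _ := by gcongr)
    rw [le_div_iff₀ (by positivity)] at this
    linarith
  -- partial sums
  have part : ∀ K : ℕ, lam ^ m * |(∑ k ∈ Finset.range K, pg a lam ((k:ℝ)+1))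
      + (pg a lam ((K:ℝ)+1) - pg a lam 1)/2 - ∫ x in (1:ℝ)..((K:ℝ)+1), pg a lam x| ≤ D * S := by
    intro K
    have hII : ∀ k < K, IntervalIntegrable (pg a lam) volume ((k:ℝ)+1) (((k+1:ℕ):ℝ)+1) := by
      intro k _
      apply ContinuousOn.intervalIntegrable
      apply (pg_continuousOn a lam).mono
      rw [Set.uIcc_of_le (by push_cast; linarith)]
      intro x hx
      exact lt_of_lt_of_le (by positivity) hx.1
    have hadj := intervalIntegral.sum_integral_adjacent_intervals (a := fun k : ℕ => (k:ℝ)+1) hII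
    simp only [Nat.cast_zero, zero_add] at hadj
    have htel : (∑ k ∈ Finset.range K, pg a lam ((k:ℝ)+1))
      + (pg a lam ((K:ℝ)+1) - pg a lam 1)/2 =
        ∑ k ∈ Finset.range K, (pg a lam ((k:ℝ)+1) + pg a lam ((k:ℝ)+1+1))/2 := by
      have := Finset.sum_range_sub (fun k : ℕ => pg a lam ((k:ℝ)+1)) K
      simp only [Nat.cast_zero, zero_add, Nat.cast_add, Nat.cast_one] at this
      rw [← this, Finset.sum_div, ← Finset.sum_add_distrib]
      refine Finset.sum_congr rfl fun k _ => by ring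
    rw [htel, ← hadj, ← Finset.sum_sub_distrib]
    calc _ ≤ lam ^ m * ∑ k ∈ Finset.range K, |(pg a lam ((k:ℝ)+1) + pg a lam ((k:ℝ)+1+1))/2
          - ∫ x in ((k:ℝ)+1)..(((k+1:ℕ):ℝ)+1), pg a lam x| := by
            gcongr; exact Finset.abs_sum_le_sum_abs _ _
      _ = ∑ k ∈ Finset.range K, lam ^ m * |(pg a lam ((k:ℝ)+1) + pg a lam ((k:ℝ)+1+1))/2
          - ∫ x in ((k:ℝ)+1)..(((k+1:ℕ):ℝ)+1), pg a lam x| := Finset.mul_sum _ _ _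
      _ ≤ ∑ k ∈ Finset.range K, D * ((k:ℝ)+1) ^ ((m:ℝ) - a - 2) := by
          refine Finset.sum_le_sum fun k _ => ?_
          rw [abs_sub_comm]
          push_cast
          exact cell k
      _ = D * ∑ k ∈ Finset.range K, ((k:ℝ)+1) ^ ((m:ℝ) - a - 2) := (Finset.mul_sum _ _ _).symm
      _ ≤ D * S := by
          gcongr
          exact hS.sum_le_tsum _ (fun k _ => by positivity)
  have lim1 := hsum.hasSum.tendsto_sum_nat
  have lim2 := hsum.tendsto_atTop_zero
  have lim3 : Filter.Tendsto (fun K : ℕ => ∫ x in (1:ℝ)..((K:ℝ)+1), pg a lam x) Filter.atTop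
      (nhds (∫ x in Set.Ioi 1, pg a lam x)) :=
    intervalIntegral_tendsto_integral_Ioi 1 (hint.mono_set (Set.Ioi_subset_Ioi zero_le_one))
      (Filter.tendsto_atTop_add_const_right _ _ tendsto_natCast_atTop_atTop)
  have lim := le_of_tendsto' ((((lim1.add ((lim2.sub_const (pg a lam 1)).div_const 2)).sub
    lim3).abs).const_mul (lam^m)) part
  -- near zero
  have hsplit : ∫ x in Set.Ioi 0, pg a lam x = (∫ x in (0:ℝ)..1, pg a lam x) +
      ∫ x in Set.Ioi 1, pg a lam x := by
    rw [intervalIntegral.integral_of_le zero_le_one, ← setIntegral_union _ measurableSet_Ioi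
      (hint.mono_set Set.Ioc_subset_Ioi_self) (hint.mono_set (Set.Ioi_subset_Ioi zero_le_one)),
      Set.Ioc_union_Ioi_eq_Ioi zero_le_one]
    exact Set.Ioc_disjoint_Ioi le_rfl
  have hzero : ‖∫ x in (0:ℝ)..1, pg a lam x‖ ≤
      ((m+j).factorial / lam0 ^ j / lam ^ m) * |(1:ℝ) - 0| := by
    apply intervalIntegral.norm_integral_le_of_norm_le_const
    intro x hx
    rw [Set.uIoc_of_le zero_le_one] at hx
    rw [Real.norm_of_nonneg (pg_nonneg hx.1), le_div_iff₀ (by positivity),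
      le_div_iff₀ (by positivity)]
    have h1 := pg_decay (m+j) a hl hx.1
    have h2 : x ^ (((m+j:ℕ):ℝ) - a) ≤ 1 :=
      Real.rpow_le_one hx.1.le hx.2 (by push_cast; have : (0:ℝ) ≤ m := by positivity
                                        linarith)
    have h3 : lam0 ^ j ≤ lam ^ j := by gcongr
    have n := pg_nonneg (a := a) (lam := lam) hx.1
    calc _ ≤ pg a lam x * lam ^ m * lam ^ j := by gcongr
      _ = lam ^ (m+j) * pg a lam x := by ring
      _ ≤ _ := h1
      _ ≤ (m+j).factorial * 1 := by gcongr
      _ = _ := by ring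
  simp only [sub_zero, abs_one, mul_one, Real.norm_eq_abs] at hzero
  rw [le_div_iff₀ (by positivity)] at hzero
  have hone := pg_decay m a hl one_pos
  rw [Real.one_rpow, mul_one] at hone
  have n1 := pg_nonneg (a := a) (lam := lam) one_pos
  rw [← hval, hsplit]
  set T := ∑' k : ℕ, pg a lam ((k:ℝ)+1)
  set I0 := ∫ x in (0:ℝ)..1, pg a lam x
  set I1 := ∫ x in Set.Ioi 1, pg a lam x
  have htri : |T - (I0 + I1)| ≤ |T + (0 - pg a lam 1)/2 - I1| + pg a lam 1 / 2 + |I0| := by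
    have : T - (I0 + I1) = (T + (0 - pg a lam 1)/2 - I1) + pg a lam 1 / 2 + (-I0) := by ring
    rw [this]
    refine (abs_add_le _ _).trans ?_
    rw [abs_neg]
    gcongr
    refine (abs_add_le _ _).trans ?_
    rw [abs_of_nonneg (a := pg a lam 1 / 2) (by positivity)]
  have := mul_le_mul_of_nonneg_left htri (by positivity : 0 ≤ lam ^ m)
  linarith

lemma log_bounds {z : ℝ} (hz : 0 ≤ z) :
    z - z^2/2 ≤ Real.log (1+z) ∧ Real.log (1+z) ≤ z - z^2/2 + z^3/3 := by
  constructor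
  · refine le_trans ?_ (Real.le_log_one_add_of_nonneg hz)
    rw [le_div_iff₀ (by positivity)]
    nlinarith [pow_nonneg hz 3]
  · have hmono : MonotoneOn (fun z : ℝ => z - z^2/2 + z^3/3 - Real.log (1+z)) (Set.Ici 0) := by
      have hd : ∀ y : ℝ, 0 ≤ y → HasDerivAt (fun z : ℝ => z - z^2/2 + z^3/3 - Real.log (1+z))
          (1 - y + y^2 - 1/(1+y)) y := by
        intro y hy
        have h1 := ((((hasDerivAt_id y).sub (((hasDerivAt_id y).pow 2).div_const 2)).add
          (((hasDerivAt_id y).pow 3).div_const 3)).sub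
          (((hasDerivAt_id y).const_add 1).log (by simp only [id]; positivity)))
        refine HasDerivAt.congr_deriv h1 ?_
        simp
      apply monotoneOn_of_deriv_nonneg (convex_Ici 0)
      · exact fun y hy => (hd y hy).continuousAt.continuousWithinAt
      · intro y hy
        rw [interior_Ici] at hy
        exact (hd y (le_of_lt hy)).differentiableAt.differentiableWithinAt
      · intro y hy
        rw [interior_Ici] at hy
        have hy : 0 < y := hy
        rw [(hd y hy.le).deriv, sub_nonneg, div_le_iff₀ (by positivity)]
        nlinarith [pow_pos hy 3]
    have := hmono (Set.mem_Ici.2 le_rfl) (Set.mem_Ici.2 hz) hz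
    simp at this
    linarith

lemma exp_bounds (a : ℝ) {d : ℝ} (hd : 0 ≤ d) :
    |Real.exp (-a) - Real.exp (-(a + d))| ≤ d * Real.exp (-a) ∧
    |Real.exp (-a) - Real.exp (-(a + d)) * (1 + d)| ≤ d^2 * Real.exp (-a) := by
  have e : Real.exp (-(a+d)) = Real.exp (-a) * Real.exp (-d) := by
    rw [← Real.exp_add]; congr 1; ring
  have h1 : 1 - d ≤ Real.exp (-d) := by have := Real.add_one_le_exp (-d); linarith
  have h2 : Real.exp (-d) ≤ 1 := Real.exp_le_one_iff.2 (by linarith)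
  have h3 : (1 + d) * Real.exp (-d) ≤ 1 := by
    have := Real.add_one_le_exp d
    rw [Real.exp_neg, ← div_eq_mul_inv, div_le_one (Real.exp_pos _)]; linarith
  have h0 := Real.exp_pos (-a)
  rw [e]
  constructor
  · rw [show Real.exp (-a) - Real.exp (-a) * Real.exp (-d) = (1 - Real.exp (-d)) * Real.exp (-a) by ring,
      abs_of_nonneg (by apply mul_nonneg <;> linarith)]
    gcongr; linarith
  · rw [show Real.exp (-a) - Real.exp (-a) * Real.exp (-d) * (1+d)
        = (1 - (1+d) * Real.exp (-d)) * Real.exp (-a) by ring,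
      abs_of_nonneg (by apply mul_nonneg <;> linarith)]
    gcongr; nlinarith

lemma w_bound {p x : ℝ} (hp : 0 < p) (hx : 0 < x) :
    |(x ^ (-p) - (x+1) ^ (-p)) - (p * x ^ (-(p+1)) - p*(p+1)/2 * x ^ (-(p+2)))| ≤
      p*(p+1)*(p+2) * x ^ (-(p+3)) := by
  have key : ∀ q : ℝ, ∀ y ∈ Set.Icc x (x+1),
      HasDerivAt (fun y : ℝ => y ^ (-q)) (-q * y ^ (-(q+1))) y := by
    intro q y hy
    have := Real.hasDerivAt_rpow_const (x := y) (p := -q) (Or.inl (hx.trans_le hy.1).ne')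
    convert this using 3; ring
  have := taylor_unit (fun y : ℝ => y ^ (-p)) (fun y => -p * y ^ (-(p+1)))
    (fun y => -p * (-(p+1) * y ^ (-(p+1+1)))) (fun y => -p * (-(p+1) * (-(p+1+1) * y ^ (-(p+1+1+1)))))
    x (p*(p+1)*(p+2) * x ^ (-(p+3))) (key p) (fun y hy => (key (p+1) y hy).const_mul _)
    (fun y hy => ((key (p+1+1) y hy).const_mul _).const_mul _)
    (fun y hy => by
      have hy0 := hx.trans_le hy.1
      rw [show -p * (-(p+1) * (-(p+1+1) * y ^ (-(p+1+1+1)))) = -(p*(p+1)*(p+2)*y ^ (-(p+3))) by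
        rw [show -(p+1+1+1) = -(p+3) by ring]; ring, abs_neg, abs_of_nonneg (by positivity)]
      gcongr ?_ * ?_
      exact Real.rpow_le_rpow_of_nonpos hx hy.1 (by linarith))
  rw [abs_sub_comm]
  convert this using 2
  rw [show -(p+1+1) = -(p+2) by ring]; ring

lemma term_bound {s p : ℝ} (hs : 0 < s) (hp : 0 < p) :
    ∃ C : ℝ, ∀ n : ℕ, 1 ≤ n → ∀ x : ℝ, 1 ≤ x →
      (n:ℝ)^2 * |(x/(s+x))^n * (x ^ (-p) - (x+1) ^ (-p)) -
        (p * pg (p+1) (n*s) x + p * (n*s) * s/2 * pg (p+3) (n*s) x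
          - p*(p+1)/2 * pg (p+2) (n*s) x)| ≤ C * x ^ (-(p+1)) := by
  set c : ℝ := s/(1+s) with hc
  have hc0 : 0 < c := by positivity
  set C1 := p*(p+1)*(p+2) with hC1
  refine ⟨C1 * (2/c^2) + p * ((s^2/2)^2 * (24/c^4) + s^3/3*(6/c^3)) + p*(p+1)/2*(s^2/2)*(6/c^3),
    fun n hn x hx => ?_⟩
  have hx0 : 0 < x := by linarith
  have hn0 : (0:ℝ) < n := by exact_mod_cast hn
  set v := (n:ℝ)/x with hv
  have hv0 : 0 < v := by positivity
  set E := Real.exp (-(c*v)) with hE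
  have hE0 : 0 < E := Real.exp_pos _
  have vE : ∀ k : ℕ, v^k * E ≤ k.factorial / c^k := by
    intro k
    rw [le_div_iff₀ (by positivity)]
    have := pow_mul_exp_neg_le k (u := c*v) (by positivity)
    rw [mul_pow] at this
    linarith
  have v2 := vE 2
  have v3 := vE 3
  have v4 := vE 4
  norm_num [Nat.factorial] at v2 v3 v4
  set a := (n:ℝ) * Real.log (1 + s/x) with ha
  set b := (n*s)/x with hb
  obtain ⟨l1, l2⟩ := log_bounds (z := s/x) (by positivity)
  have l3 : Real.log (1+s/x) ≤ s/x := by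
    have := Real.log_le_sub_one_of_pos (x := 1 + s/x) (by positivity); linarith
  have hF : (x/(s+x))^n = Real.exp (-a) := by
    rw [ha, ← mul_neg, Real.exp_nat_mul, Real.exp_neg, Real.exp_log (by positivity)]
    congr 1
    field_simp
    ring
  have l4 : c / x ≤ Real.log (1+s/x) := by
    refine le_trans ?_ (Real.le_log_one_add_of_nonneg (by positivity : 0 ≤ s/x))
    rw [hc, div_div, show 2*(s/x)/(s/x+2) = 2*s/(s+2*x) by field_simp,
      div_le_div_iff₀ (by positivity) (by positivity)]
    nlinarith [mul_pos hs hx0, mul_pos hs hs, mul_pos (mul_pos hs hs) hx0]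
  have hFE : Real.exp (-a) ≤ E := by
    rw [hE]; apply Real.exp_le_exp.2
    rw [neg_le_neg_iff, ha, hv]
    calc c * (n/x) = n * (c/x) := by ring
      _ ≤ _ := by gcongr
  have hba : a ≤ b := by
    rw [ha, hb, mul_div_assoc]; gcongr
  have hbE : Real.exp (-b) ≤ E := (Real.exp_le_exp.2 (by linarith)).trans hFE
  set d := b - a with hd
  have hd0 : 0 ≤ d := by linarith
  have hbd : b = a + d := by rw [hd]; ring
  have hd1 : d ≤ s^2/2 * (n / x^2) := by
    have : d = n * (s/x - Real.log (1+s/x)) := by rw [hd, ha, hb]; ring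
    rw [this, show s^2/2 * (n / x^2) = n * ((s/x)^2/2) by field_simp]
    gcongr; linarith
  have hd2 : |d - s^2/2 * (n / x^2)| ≤ s^3/3 * (n/x^3) := by
    have : d - s^2/2 * (n / x^2) = -(n * (Real.log (1+s/x) - (s/x - (s/x)^2/2))) := by
      rw [hd, ha, hb]; field_simp; ring
    rw [this, abs_neg, abs_of_nonneg (by apply mul_nonneg hn0.le; linarith),
      show s^3/3 * (n / x^3) = n * ((s/x)^3/3) by field_simp]
    gcongr; linarith
  obtain ⟨e1, e2⟩ := exp_bounds a hd0
  rw [← hbd] at e1 e2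
  have f1 : |Real.exp (-a) - Real.exp (-b)| ≤ s^2/2 * (n/x^2) * E :=
    e1.trans (by gcongr)
  have f2 : |Real.exp (-a) - Real.exp (-b) * (1 + s^2/2 * (n / x^2))| ≤
      (s^2/2 * (n/x^2))^2 * E + s^3/3 * (n/x^3) * E := by
    have : Real.exp (-a) - Real.exp (-b) * (1 + s^2/2 * (n / x^2)) =
      (Real.exp (-a) - Real.exp (-b) * (1 + d)) + (d - s^2/2 * (n / x^2)) * Real.exp (-b) := by ring
    rw [this]
    refine (abs_add_le _ _).trans ?_
    rw [abs_mul, abs_of_pos (Real.exp_pos (-b))]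
    exact add_le_add (e2.trans (by gcongr)) (by gcongr)
  have f3 := w_bound hp hx0
  rw [hF]
  have p2 : x ^ (-(p+2)) = x ^ (-(p+1)) / x := by
    rw [show -(p+2) = -(p+1) - 1 by ring, Real.rpow_sub_one hx0.ne']
  have p3 : x ^ (-(p+3)) = x ^ (-(p+1)) / x^2 := by
    rw [show -(p+3) = -(p+1) - (2:ℕ) by push_cast; ring, Real.rpow_sub_natCast hx0.ne']
  unfold pg
  rw [← hb, p2, p3]
  rw [p2, p3] at f3
  set X := x ^ (-(p+1))
  have hX : 0 < X := by positivity
  set w := x ^ (-p) - (x+1) ^ (-p)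
  set F := Real.exp (-a)
  set B := Real.exp (-b)
  have hF0 : 0 < F := Real.exp_pos _
  have dec : F * w - (p * (X * B) + p * (n*s) * s/2 * (X / x^2 * B) - p*(p+1)/2 * (X / x * B))
      = F * (w - (p * X - p*(p+1)/2 * (X/x))) + p * X * (F - B * (1 + s^2/2 * (n/x^2)))
        + (-(p*(p+1)/2 * (X/x))) * (F - B) := by
    ring
  rw [dec]
  have tri : |F * (w - (p * X - p*(p+1)/2 * (X/x))) + p * X * (F - B * (1 + s^2/2 * (n/x^2)))
        + (-(p*(p+1)/2 * (X/x))) * (F - B)| ≤ E * (C1 * (X/x^2)) +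
        p * X * ((s^2/2 * (n/x^2))^2 * E + s^3/3 * (n/x^3) * E) +
        (p*(p+1)/2 * (X/x)) * (s^2/2 * (n/x^2) * E) := by
    refine (abs_add_le _ _).trans (add_le_add ((abs_add_le _ _).trans (add_le_add ?_ ?_)) ?_)
    · rw [abs_mul, abs_of_pos hF0]; gcongr
    · rw [abs_mul, abs_of_pos (by positivity)]; gcongr
    · rw [abs_mul, abs_neg, abs_of_pos (by positivity)]; gcongr
  calc _ ≤ (n:ℝ)^2 * _ := mul_le_mul_of_nonneg_left tri (by positivity)
    _ = (C1 * (v^2*E) + p * ((s^2/2)^2 * (v^4*E) + s^3/3 * (v^3*E))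
        + p*(p+1)/2*(s^2/2)*(v^3*E)) * X := by
        rw [hv]; field_simp
    _ ≤ _ := by gcongr

lemma w_nonneg {p x : ℝ} (hp : 0 < p) (hx : 0 < x) : 0 ≤ x ^ (-p) - (x+1) ^ (-p) := by
  rw [sub_nonneg]
  exact Real.rpow_le_rpow_of_nonpos hx (by linarith) (by linarith)

lemma w_hasSum {p : ℝ} (hp : 0 < p) (j : ℕ) :
    HasSum (fun k : ℕ => (((k + j : ℕ):ℝ)+1) ^ (-p) - (((k + j : ℕ):ℝ)+1+1) ^ (-p))
      (((j:ℝ)+1) ^ (-p)) := by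
  have ht : Filter.Tendsto (fun k : ℕ => (((k+j:ℕ):ℝ)+1) ^ (-p)) Filter.atTop (nhds 0) :=
    (tendsto_rpow_neg_atTop hp).comp (Filter.tendsto_atTop_add_const_right _ _
      (tendsto_natCast_atTop_atTop.comp (Filter.tendsto_add_atTop_nat j)))
  rw [hasSum_iff_tendsto_nat_of_nonneg (fun k => w_nonneg hp (by positivity))]
  have := ht.const_sub (((j:ℝ)+1) ^ (-p))
  rw [sub_zero] at this
  refine this.congr fun K => ?_
  have h := Finset.sum_range_sub' (fun k : ℕ => (((k+j:ℕ):ℝ)+1) ^ (-p)) K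
  rw [zero_add] at h
  rw [← h]
  refine Finset.sum_congr rfl fun k _ => ?_
  push_cast
  congr 2
  ring

lemma expectation {Ω : Type*} [MeasurableSpace Ω] (μ : Measure Ω) [IsProbabilityMeasure μ]
    {s p : ℝ} (hp : 0 < p) (n : ℕ) (hn : 1 ≤ n)
    (N : Ω → ℕ) (hN : Measurable N)
    (hlaw : ∀ k : ℕ, (μ {ω | N ω ≤ k}).toReal = ((k : ℝ) / (s + k)) ^ n) :
    HasSum (fun k : ℕ => (((k:ℝ)+1)/(s+((k:ℝ)+1)))^n * (((k:ℝ)+1) ^ (-p) - ((k:ℝ)+1+1) ^ (-p)))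
      (∫ ω, (N ω : ℝ) ^ (-p) ∂μ) := by
  set w : ℕ → ℝ := fun k => ((k:ℝ)+1) ^ (-p) - ((k:ℝ)+1+1) ^ (-p) with hw
  have hw0 : ∀ k, 0 ≤ w k := fun k => w_nonneg hp (by positivity)
  have hws : Summable w := by simpa using (w_hasSum hp 0).summable
  set f : ℕ → Ω → ℝ := fun k => Set.indicator {ω | N ω ≤ k+1} (fun _ => w k) with hf
  have hms : ∀ k : ℕ, MeasurableSet {ω | N ω ≤ k+1} := fun k => hN measurableSet_Iic
  have hint : ∀ k, Integrable (f k) μ := fun k => (integrable_const _).indicator (hms k)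
  have hfi : ∀ k, ∫ ω, f k ω ∂μ =
      (((k:ℝ)+1)/(s+((k:ℝ)+1)))^n * w k := by
    intro k
    have h := hlaw (k+1)
    push_cast at h
    rw [hf, integral_indicator_const _ (hms k), smul_eq_mul, ← h]
    rfl
  have hf0 : ∀ k ω, 0 ≤ f k ω := fun k ω => Set.indicator_nonneg (fun _ _ => hw0 k) _
  have hle : ∀ k, ∫ ω, ‖f k ω‖ ∂μ ≤ w k := by
    intro k
    have : ∫ ω, ‖f k ω‖ ∂μ ≤ ∫ _ω, w k ∂μ := by
      refine integral_mono (hint k).norm (integrable_const _) fun ω => ?_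
      rw [Real.norm_of_nonneg (hf0 k ω)]
      exact Set.indicator_le_self' (fun _ _ => hw0 k) ω
    simpa using this
  have hsn : Summable fun k => ∫ ω, ‖f k ω‖ ∂μ :=
    Summable.of_nonneg_of_le (fun k => integral_nonneg fun _ => norm_nonneg _) hle hws
  have main := hasSum_integral_of_summable_integral_norm hint hsn
  simp only [hfi] at main
  have hpos : ∀ᵐ ω ∂μ, 1 ≤ N ω := by
    have h := hlaw 0
    rw [Nat.cast_zero, zero_div, zero_pow (by omega), ENNReal.toReal_eq_zero_iff] at h
    have h0 := h.resolve_right (measure_ne_top _ _)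
    rw [ae_iff]
    convert h0 using 3
    ext
    omega
  have heq : ∫ ω, (N ω : ℝ) ^ (-p) ∂μ = ∫ ω, ∑' k, f k ω ∂μ := by
    apply integral_congr_ae
    filter_upwards [hpos] with ω hω
    obtain ⟨j, hj⟩ : ∃ j, N ω = j + 1 := ⟨N ω - 1, by omega⟩
    symm
    apply HasSum.tsum_eq
    rw [← hasSum_nat_add_iff' j, Finset.sum_eq_zero, sub_zero]
    · have := w_hasSum hp j
      rw [hj]; push_cast
      push_cast at this
      have hfun : (fun k : ℕ => f (k + j) ω) =
          fun k : ℕ => ((k:ℝ) + j + 1) ^ (-p) - ((k:ℝ) + j + 1 + 1) ^ (-p) := by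
        funext k
        have hmem : ω ∈ {ω | N ω ≤ k + j + 1} := by
          rw [Set.mem_ofPred_eq, hj]; omega
        simp only [hf, hw]
        rw [Set.indicator_of_mem hmem]
        push_cast
        rfl
      rw [hfun]
      exact this
    · intro i hi
      rw [Finset.mem_range] at hi
      simp [hf, hj]; omega
  rw [heq]
  exact main

/-- Expansion of negative moments of the maximum of discrete Pareto variables:
if `P(N_n(s) ≤ k) = (k/(s+k))^n`, then for `0 < p < 1`,
`E[(N_n(s))^{-p}] = Γ(p+1)/(s^p n^p) + (s-1)pΓ(p+2)/(2 s^{p+1} n^{p+1}) + R_n`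
with `|R_n| ≤ c(p,s) n^{-2}` for a constant `c(p,s)` independent of `n`. -/
theorem discrete_pareto_negative_moment_expansion
    {Ω : Type*} [MeasurableSpace Ω] (μ : Measure Ω) [IsProbabilityMeasure μ]
    (s : ℝ) (hs : 0 < s) (p : ℝ) (hp : 0 < p) (hp1 : p < 1)
    (N : ℕ → Ω → ℕ) (hNmeas : ∀ n, Measurable (N n))
    (hlaw : ∀ n : ℕ, ∀ k : ℕ,
      (μ {ω | N n ω ≤ k}).toReal = ((k : ℝ) / (s + k)) ^ n) :
    ∃ c : ℝ, ∀ n : ℕ, 1 ≤ n →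
      |(∫ ω, ((N n ω : ℝ)) ^ (-p) ∂μ)
          - Real.Gamma (p + 1) / (s ^ p * (n : ℝ) ^ p)
          - (s - 1) * p * Real.Gamma (p + 2) / (2 * s ^ (p + 1) * (n : ℝ) ^ (p + 1))|
        ≤ c / (n : ℝ) ^ 2 := by
  obtain ⟨C0, hC0⟩ := term_bound hs hp
  obtain ⟨C1, hC1⟩ := pg_sum (a := p+1) (by linarith) 2 (by push_cast; linarith) hs
  obtain ⟨C2, hC2⟩ := pg_sum (a := p+2) (by linarith) 2 (by push_cast; linarith) hs
  obtain ⟨C3, hC3⟩ := pg_sum (a := p+3) (by linarith) 3 (by push_cast; linarith) hs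
  have hS := summable_shift (b := -(p+1)) (by linarith)
  set S := ∑' k : ℕ, ((k:ℝ)+1) ^ (-(p+1))
  refine ⟨C0 * S + (p * C1 + p*s/2 * C3 + p*(p+1)/2 * C2) / s^2, fun n hn => ?_⟩
  have hn0 : (1:ℝ) ≤ n := by exact_mod_cast hn
  have hn1 : (0:ℝ) < n := by linarith
  have hlam : s ≤ n * s := by nlinarith
  have hl0 : 0 < (n:ℝ) * s := by positivity
  have b1 := hC1 (n*s) hlam
  have b2 := hC2 (n*s) hlam
  have b3 := hC3 (n*s) hlam
  have s1 := (pg_summable (a := p+1) (by linarith) hl0).hasSum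
  have s2 := (pg_summable (a := p+2) (by linarith) hl0).hasSum
  have s3 := (pg_summable (a := p+3) (by linarith) hl0).hasSum
  have hE := expectation μ hp n hn (N n) (hNmeas n) (hlaw n)
  set T1 := ∑' k : ℕ, pg (p+1) (n*s) ((k:ℝ)+1)
  set T2 := ∑' k : ℕ, pg (p+2) (n*s) ((k:ℝ)+1)
  set T3 := ∑' k : ℕ, pg (p+3) (n*s) ((k:ℝ)+1)
  set EE := ∫ ω, ((N n ω : ℝ)) ^ (-p) ∂μ
  have hdiff := hE.sub (((s1.mul_left p).add (s3.mul_left (p * (n*s) * s/2))).sub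
    (s2.mul_left (p*(p+1)/2)))
  have hb : ‖EE - (p * T1 + p * (n*s) * s/2 * T3 - p*(p+1)/2 * T2)‖ ≤ C0 * S / n^2 := by
    rw [← hdiff.tsum_eq]
    refine tsum_of_norm_bounded ((hS.hasSum.mul_left C0).div_const _) fun k => ?_
    rw [le_div_iff₀ (by positivity), Real.norm_eq_abs, mul_comm]
    exact hC0 n hn ((k:ℝ)+1) (by have : (0:ℝ) ≤ k := by positivity
                                 linarith)
  rw [Real.norm_eq_abs] at hb
  set L := (n:ℝ) * s with hL
  set G1 := Real.Gamma (p+1-1) * L ^ (1-(p+1))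
  set G2 := Real.Gamma (p+2-1) * L ^ (1-(p+2))
  set G3 := Real.Gamma (p+3-1) * L ^ (1-(p+3))
  have hgam : Real.Gamma (p + 1) / (s ^ p * (n : ℝ) ^ p)
      + (s - 1) * p * Real.Gamma (p + 2) / (2 * s ^ (p + 1) * (n : ℝ) ^ (p + 1))
      = p * G1 + p * L * s/2 * G3 - p*(p+1)/2 * G2 := by
    have g1 : Real.Gamma (p+1) = p * Real.Gamma p := Real.Gamma_add_one hp.ne'
    have g2 : Real.Gamma (p+2) = (p+1) * Real.Gamma (p+1) := by
      rw [show p+2 = p+1+1 by ring]; exact Real.Gamma_add_one (by positivity)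
    have r1 : L ^ (1-(p+1)) = 1 / (s^p * (n:ℝ)^p) := by
      rw [show 1-(p+1) = -p by ring, Real.rpow_neg hl0.le, hL, Real.mul_rpow hn1.le hs.le]
      rw [one_div, mul_comm]
    have r2 : L ^ (1-(p+2)) = 1 / (s^p * (n:ℝ)^p) / L := by
      rw [← r1, ← Real.rpow_sub_one hl0.ne']; congr 1; ring
    have r3 : L ^ (1-(p+3)) = 1 / (s^p * (n:ℝ)^p) / L / L := by
      rw [← r2, ← Real.rpow_sub_one hl0.ne']; congr 1; ring
    simp only [G1, G2, G3]
    rw [r1, r2, r3, show p+1-1 = p by ring, show p+2-1 = p+1 by ring, show p+3-1 = p+2 by ring,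
      g2, g1, Real.rpow_add_one hs.ne', Real.rpow_add_one hn1.ne', hL]
    have := Real.rpow_pos_of_pos hs p
    have := Real.rpow_pos_of_pos hn1 p
    field_simp
    ring
  rw [sub_sub, hgam]
  have tri : |EE - (p * G1 + p * L * s/2 * G3 - p*(p+1)/2 * G2)| ≤
      |EE - (p * T1 + p * L * s/2 * T3 - p*(p+1)/2 * T2)| + p * |T1 - G1|
      + p * L * s/2 * |T3 - G3| + p*(p+1)/2 * |T2 - G2| := by
    have e : EE - (p * G1 + p * L * s/2 * G3 - p*(p+1)/2 * G2) =
      (EE - (p * T1 + p * L * s/2 * T3 - p*(p+1)/2 * T2)) + p * (T1 - G1)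
      + p * L * s/2 * (T3 - G3) + (-(p*(p+1)/2)) * (T2 - G2) := by ring
    rw [e]
    refine (abs_add_le _ _).trans (add_le_add ((abs_add_le _ _).trans
      (add_le_add ((abs_add_le _ _).trans (add_le_add le_rfl ?_)) ?_)) ?_)
    · rw [abs_mul, abs_of_pos (by positivity)]
    · rw [abs_mul, abs_of_pos (by positivity)]
    · rw [abs_mul, abs_neg, abs_of_pos (by positivity)]
  refine tri.trans ?_
  rw [le_div_iff₀ (by positivity)] at hb ⊢
  have e : (p * |T1 - G1| + p * L * s/2 * |T3 - G3| + p*(p+1)/2 * |T2 - G2|) * (n:ℝ)^2 =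
      (p * (L^2 * |T1 - G1|) + p*s/2 * (L^3 * |T3 - G3|) + p*(p+1)/2 * (L^2 * |T2 - G2|)) / s^2 := by
    rw [hL]; field_simp
  have h2 : (p * (L^2 * |T1 - G1|) + p*s/2 * (L^3 * |T3 - G3|) + p*(p+1)/2 * (L^2 * |T2 - G2|)) / s^2
      ≤ (p * C1 + p*s/2 * C3 + p*(p+1)/2 * C2) / s^2 := by gcongr
  linarith
end

section
/- For r > 1 and g_n ≥ 1, | ∫_{1/g_n}^∞ x^{α-1} e^{-rx} sin(2π k g_n x) dx | ≤ Γ(α)/(2π k g_n)^α for every α ∈ (0,1) and integer k ≥ 1; consequently, Σ_{k≥1} (1/(kπ)) ∫_0^∞ x^{α-1} e^{-rx} sin(2π k g_n x) dx converges absolutely with absolute value at most (Γ(α)/(π(2π)^α)) ζ(α+1) g_n^{-α}. -/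
open MeasureTheory Real

/-- A sine integral against a decreasing integrable function is nonnegative. -/
lemma sine_integral_nonneg {h : ℝ → ℝ} {b : ℝ} (hb : 0 < b)
    (hi : IntegrableOn h (Set.Ioi 0)) (ha : AntitoneOn h (Set.Ioi 0)) :
    0 ≤ ∫ x in Set.Ioi (0 : ℝ), h x * Real.sin (b * x) := by
  have hint : IntegrableOn (fun x => h x * Real.sin (b * x)) (Set.Ioi 0) := by
    refine Integrable.mul_bdd (c := 1) hi (by fun_prop) ?_
    exact Filter.Eventually.of_forall fun x => by
      simpa using Real.abs_sin_le_one (b * x)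
  have hT : 0 < 2 * π / b := by positivity
  have htend : Filter.Tendsto (fun n : ℕ => (n : ℝ) * (2 * π / b)) Filter.atTop Filter.atTop :=
    tendsto_natCast_atTop_atTop.atTop_mul_const hT
  refine ge_of_tendsto (intervalIntegral_tendsto_integral_Ioi 0 hint htend)
    (Filter.Eventually.of_forall fun n => ?_)
  have hii : ∀ p q : ℝ, 0 ≤ p → p ≤ q →
      IntervalIntegrable (fun x => h x * Real.sin (b * x)) volume p q := by
    intro p q hp hpq
    rw [intervalIntegrable_iff_integrableOn_Ioc_of_le hpq]
    exact hint.mono_set fun x hx => lt_of_le_of_lt hp hx.1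
  induction n with
  | zero => simp
  | succ n ih =>
    have hp0 : (0 : ℝ) ≤ (n : ℝ) * (2 * π / b) := by positivity
    have hpq : (n : ℝ) * (2 * π / b) ≤ ((n + 1 : ℕ) : ℝ) * (2 * π / b) := by
      gcongr; simp
    rw [← intervalIntegral.integral_add_adjacent_intervals (hii _ _ le_rfl hp0) (hii _ _ hp0 hpq)]
    refine add_nonneg ih ?_
    set p : ℝ := (n : ℝ) * (2 * π / b) with hp
    set q : ℝ := ((n + 1 : ℕ) : ℝ) * (2 * π / b) with hq
    have hbp : b * p = n * (2 * π) := by rw [hp]; field_simp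
    have hbq : b * q = n * (2 * π) + 2 * π := by rw [hq]; push_cast; field_simp
    have hm : 0 < p + π / b := by positivity
    have hbm : b * (p + π / b) = n * (2 * π) + π := by rw [mul_add, hbp]; field_simp
    have hz : ∫ x in p..q, h (p + π / b) * Real.sin (b * x) = 0 := by
      rw [intervalIntegral.integral_const_mul, intervalIntegral.integral_comp_mul_left _ hb.ne',
        integral_sin, hbp, hbq, Real.cos_add_two_pi]
      simp
    have hnn : 0 ≤ ∫ x in p..q, (h x * Real.sin (b * x) - h (p + π / b) * Real.sin (b * x)) := by
      rw [intervalIntegral.integral_of_le hpq]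
      refine setIntegral_nonneg measurableSet_Ioc fun x hx => ?_
      have hx0 : 0 < x := lt_of_le_of_lt hp0 hx.1
      rw [← sub_mul, ← Real.sin_sub_nat_mul_two_pi (b * x) n]
      rcases le_total x (p + π / b) with hxm | hxm
      · refine mul_nonneg (sub_nonneg.2 (ha hx0 hm hxm)) (Real.sin_nonneg_of_nonneg_of_le_pi ?_ ?_)
        · have := mul_le_mul_of_nonneg_left hx.1.le hb.le
          linarith
        · have := mul_le_mul_of_nonneg_left hxm hb.le
          linarith
      · refine mul_nonneg_of_nonpos_of_nonpos (sub_nonpos.2 (ha hm hx0 hxm)) ?_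
        rw [← Real.sin_sub_two_pi]
        refine Real.sin_nonpos_of_nonpos_of_neg_pi_le ?_ ?_
        · have := mul_le_mul_of_nonneg_left hx.2 hb.le
          linarith
        · have := mul_le_mul_of_nonneg_left hxm hb.le
          linarith
    rw [intervalIntegral.integral_sub (hii _ _ hp0 hpq)
      (Continuous.intervalIntegrable (by fun_prop) _ _), hz, sub_zero] at hnn
    exact hnn

lemma gamma_integrable {r α : ℝ} (hr : 0 < r) (hα0 : 0 < α) :
    IntegrableOn (fun x : ℝ => x ^ (α - 1) * Real.exp (-r * x)) (Set.Ioi 0) := by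
  have := integrableOn_rpow_mul_exp_neg_mul_rpow (p := 1) (s := α - 1) (b := r)
    (by linarith) one_pos hr
  simpa using this

/-- The Gamma integral with a complex rate, by analytic continuation. -/
lemma complex_rate_integral {α : ℝ} (hα0 : 0 < α) {z : ℂ} (hz : 0 < z.re) :
    ∫ x in Set.Ioi (0 : ℝ), (x : ℂ) ^ ((α : ℂ) - 1) * Complex.exp (-(z * x))
      = (1 / z) ^ (α : ℂ) * Complex.Gamma α := by
  have hnorm : ∀ (s : ℝ) (w : ℂ) (x : ℝ), 0 < x →
      ‖(x : ℂ) ^ (s : ℂ) * Complex.exp (-(w * x))‖ = x ^ s * Real.exp (-w.re * x) := by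
    intro s w x hx
    rw [norm_mul, Complex.norm_cpow_eq_rpow_re_of_pos hx, Complex.norm_exp]
    simp
  have hmeas : ∀ (s : ℝ) (w : ℂ), AEStronglyMeasurable
      (fun x : ℝ => (x : ℂ) ^ (s : ℂ) * Complex.exp (-(w * x))) (volume.restrict (Set.Ioi 0)) :=
    fun s w => Measurable.aestronglyMeasurable (by fun_prop)
  have hexp : ((α : ℂ) - 1) = ((α - 1 : ℝ) : ℂ) := by push_cast; rfl
  have hopen : IsOpen {w : ℂ | 0 < w.re} := isOpen_lt continuous_const Complex.continuous_re
  have hF : DifferentiableOn ℂ (fun w : ℂ => ∫ x in Set.Ioi (0 : ℝ),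
      (x : ℂ) ^ ((α : ℂ) - 1) * Complex.exp (-(w * x))) {w : ℂ | 0 < w.re} := by
    intro w hw
    have hw' : 0 < w.re := hw
    have hε : 0 < w.re / 2 := by linarith
    rw [hexp]
    refine DifferentiableAt.differentiableWithinAt (HasDerivAt.differentiableAt
      (hasDerivAt_integral_of_dominated_loc_of_deriv_le
        (μ := volume.restrict (Set.Ioi (0 : ℝ)))
        (F' := fun (v : ℂ) (x : ℝ) => (x : ℂ) ^ ((α - 1 : ℝ) : ℂ) *
          (Complex.exp (-(v * x)) * (-(x : ℂ))))
        (bound := fun x : ℝ => x ^ α * Real.exp (-(w.re / 2) * x))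
        (Metric.ball_mem_nhds w hε) (Filter.Eventually.of_forall fun v => hmeas _ v)
        ?_ ?_ ?_ ?_ ?_).2)
    · refine Integrable.mono' (gamma_integrable hw' hα0) (hmeas _ w) ?_
      refine (ae_restrict_mem measurableSet_Ioi).mono fun x hx => ?_
      rw [hnorm _ _ _ hx]
    · exact Measurable.aestronglyMeasurable (by fun_prop)
    · refine (ae_restrict_mem measurableSet_Ioi).mono fun x hx v hv => ?_
      have hx' : 0 < x := hx
      rw [← mul_assoc, norm_mul, hnorm _ _ _ hx, norm_neg, Complex.norm_real,
        Real.norm_of_nonneg hx'.le]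
      have hvre : w.re / 2 ≤ v.re := by
        have h1 := (Complex.abs_re_le_norm (v - w)).trans (mem_ball_iff_norm.1 hv).le
        rw [Complex.sub_re] at h1
        have := (abs_le.1 h1).1
        linarith
      have hxx : x ^ α = x ^ (α - 1) * x := by
        rw [Real.rpow_sub_one hx'.ne']; field_simp
      rw [hxx, mul_right_comm]
      gcongr
    · have := gamma_integrable (α := α + 1) hε (by linarith)
      rw [add_sub_cancel_right] at this
      exact this
    · refine Filter.Eventually.of_forall fun x v _ => ?_
      have h1 : HasDerivAt (fun v : ℂ => -(v * (x : ℂ))) (-(x : ℂ)) v := by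
        have h0 := (hasDerivAt_mul_const (x := v) (x : ℂ)).neg
        exact h0
      exact (h1.cexp).const_mul _
  have hG : DifferentiableOn ℂ (fun w : ℂ => (1 / w) ^ (α : ℂ) * Complex.Gamma α)
      {w : ℂ | 0 < w.re} := by
    intro w hw
    have hw' : 0 < w.re := hw
    have hw0 : w ≠ 0 := fun h => by rw [h] at hw'; simp at hw'
    have h1 : DifferentiableAt ℂ (fun w : ℂ => 1 / w) w := by
      simpa using differentiableAt_inv hw0
    refine DifferentiableAt.differentiableWithinAt
      ((h1.cpow_const (Or.inl ?_)).mul_const _)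
    rw [one_div, Complex.inv_re]
    have := Complex.normSq_pos.2 hw0
    positivity
  have hconn : IsPreconnected {w : ℂ | 0 < w.re} :=
    (convex_halfSpace_re_gt 0).isPreconnected
  refine (hF.analyticOnNhd hopen).eqOn_of_preconnected_of_frequently_eq
    (hG.analyticOnNhd hopen) hconn (z₀ := ((1 : ℝ) : ℂ)) (by simp) ?_ hz
  have ht : Filter.Tendsto (fun t : ℝ => (t : ℂ)) (nhdsWithin 1 {1}ᶜ)
      (nhdsWithin ((1 : ℝ) : ℂ) {((1 : ℝ) : ℂ)}ᶜ) := by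
    refine tendsto_nhdsWithin_iff.2 ⟨(Complex.continuous_ofReal.tendsto 1).mono_left
      nhdsWithin_le_nhds, ?_⟩
    filter_upwards [self_mem_nhdsWithin] with t ht h
    exact ht (Complex.ofReal_injective h)
  refine ht.frequently (Filter.Eventually.frequently ?_)
  have : ∀ᶠ t : ℝ in nhdsWithin 1 {1}ᶜ, 0 < t :=
    nhdsWithin_le_nhds (lt_mem_nhds one_pos)
  filter_upwards [this] with t ht0
  exact Complex.integral_cpow_mul_exp_neg_mul_Ioi (by simpa) ht0

lemma full_bound {r b α : ℝ} (hr : 0 < r) (hb : 0 < b) (hα0 : 0 < α) :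
    |∫ x in Set.Ioi (0 : ℝ), x ^ (α - 1) * Real.exp (-r * x) * Real.sin (b * x)|
      ≤ Real.Gamma α / b ^ α := by
  let z : ℂ := ⟨r, -b⟩
  have hz : 0 < z.re := hr
  have hz0 : z ≠ 0 := fun h => by rw [h] at hz; simp at hz
  have key := complex_rate_integral hα0 hz
  have hpt : ∀ x ∈ Set.Ioi (0 : ℝ), (x : ℂ) ^ ((α : ℂ) - 1) * Complex.exp (-(z * x)) =
      ((x ^ (α - 1) * Real.exp (-r * x) : ℝ) : ℂ) * Complex.exp (((b * x : ℝ) : ℂ) * Complex.I) := by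
    intro x hx
    have h1 : -(z * x) = ((-r * x : ℝ) : ℂ) + ((b * x : ℝ) : ℂ) * Complex.I := by
      apply Complex.ext <;> simp [z]
    rw [h1, Complex.exp_add, ← mul_assoc]
    push_cast [Complex.ofReal_cpow (le_of_lt (Set.mem_Ioi.1 hx))]
    rfl
  rw [setIntegral_congr_fun measurableSet_Ioi hpt] at key
  have hI : IntegrableOn (fun x : ℝ => ((x ^ (α - 1) * Real.exp (-r * x) : ℝ) : ℂ) *
      Complex.exp (((b * x : ℝ) : ℂ) * Complex.I)) (Set.Ioi 0) := by
    refine Integrable.mul_bdd (c := 1) (gamma_integrable hr hα0).ofReal (by fun_prop) ?_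
    exact Filter.Eventually.of_forall fun x => by
      rw [Complex.norm_exp_ofReal_mul_I]
  have him := congrArg Complex.im key
  have h2 := integral_im (𝕜 := ℂ) hI
  simp only [RCLike.im_eq_complex_im] at h2
  rw [← h2] at him
  have hpt2 : ∀ x : ℝ, (((x ^ (α - 1) * Real.exp (-r * x) : ℝ) : ℂ) *
      Complex.exp (((b * x : ℝ) : ℂ) * Complex.I)).im
      = x ^ (α - 1) * Real.exp (-r * x) * Real.sin (b * x) := by
    intro x
    rw [Complex.im_ofReal_mul, Complex.exp_ofReal_mul_I_im]
  simp only [hpt2] at him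
  rw [him]
  refine (Complex.abs_im_le_norm _).trans ?_
  rw [norm_mul, Complex.norm_cpow_real, Complex.Gamma_ofReal, Complex.norm_real,
    Real.norm_of_nonneg (Real.Gamma_pos_of_pos hα0).le, norm_div, norm_one,
    Real.div_rpow zero_le_one (norm_nonneg _), Real.one_rpow, one_div_mul_eq_div]
  have hbz : b ≤ ‖z‖ := by
    have := Complex.abs_im_le_norm z
    simpa [z, abs_of_pos hb] using this
  have := (Real.Gamma_pos_of_pos hα0).le
  gcongr

lemma trunc_bound {r b α a : ℝ} (hr : 0 < r) (hb : 0 < b) (hα0 : 0 < α) (hα1 : α < 1)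
    (ha : 0 < a) (k : ℕ) (hab : b * a = k * (2 * π)) :
    |∫ x in Set.Ioi a, x ^ (α - 1) * Real.exp (-r * x) * Real.sin (b * x)|
      ≤ Real.Gamma α / b ^ α := by
  have hshift : ∫ x in Set.Ioi a, x ^ (α - 1) * Real.exp (-r * x) * Real.sin (b * x)
      = ∫ y in Set.Ioi (0 : ℝ), (y + a) ^ (α - 1) * Real.exp (-r * (y + a)) * Real.sin (b * y) := by
    rw [← (measurePreserving_add_right volume a).setIntegral_preimage_emb
      (measurableEmbedding_addRight a)]
    rw [Set.preimage_add_const_Ioi, sub_self]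
    refine setIntegral_congr_fun measurableSet_Ioi fun y _ => ?_
    rw [mul_add b y a, hab, Real.sin_add_nat_mul_two_pi]
  rw [hshift]
  have hf := gamma_integrable (α := α) hr hα0
  have hs : α - 1 ≤ 0 := by linarith
  have hle : ∀ y ∈ Set.Ioi (0 : ℝ), (y + a) ^ (α - 1) * Real.exp (-r * (y + a)) ≤
      y ^ (α - 1) * Real.exp (-r * y) := by
    intro y hy
    have hy' : 0 < y := hy
    refine mul_le_mul (Real.rpow_le_rpow_of_nonpos hy' (by linarith) hs)
      (Real.exp_le_exp.2 (by nlinarith)) (Real.exp_pos _).le (by positivity)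
  have hh : IntegrableOn (fun y : ℝ => (y + a) ^ (α - 1) * Real.exp (-r * (y + a)))
      (Set.Ioi 0) := by
    refine Integrable.mono' hf (Measurable.aestronglyMeasurable (by fun_prop)) ?_
    refine (ae_restrict_mem measurableSet_Ioi).mono fun y hy => ?_
    have hy' : 0 < y := hy
    rw [Real.norm_of_nonneg (by positivity)]
    exact hle y hy
  have hhanti : AntitoneOn (fun y : ℝ => (y + a) ^ (α - 1) * Real.exp (-r * (y + a)))
      (Set.Ioi 0) := by
    intro x hx y hy hxy
    have hx' : 0 < x := hx
    have hy' : 0 < y := hy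
    exact mul_le_mul (Real.rpow_le_rpow_of_nonpos (by linarith) (by linarith) hs)
      (Real.exp_le_exp.2 (by nlinarith)) (Real.exp_pos _).le (by positivity)
  have hu : AntitoneOn (fun y : ℝ => y ^ (α - 1) - Real.exp (-r * a) * (y + a) ^ (α - 1))
      (Set.Ioi 0) := by
    have hd : ∀ y ∈ Set.Ioi (0 : ℝ), HasDerivAt
        (fun y : ℝ => y ^ (α - 1) - Real.exp (-r * a) * (y + a) ^ (α - 1))
        ((α - 1) * y ^ (α - 1 - 1) - Real.exp (-r * a) * ((α - 1) * (y + a) ^ (α - 1 - 1))) y := by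
      intro y hy
      have hy' : 0 < y := hy
      have h1 := Real.hasDerivAt_rpow_const (x := y) (p := α - 1) (Or.inl hy'.ne')
      have h2 := (Real.hasDerivAt_rpow_const (x := y + a) (p := α - 1)
        (Or.inl (by positivity))).comp_add_const y a
      exact h1.sub (h2.const_mul _)
    refine antitoneOn_of_deriv_nonpos (convex_Ioi 0)
      (fun y hy => (hd y hy).continuousAt.continuousWithinAt)
      (fun y hy => ?_) (fun y hy => ?_)
    · rw [interior_Ioi] at hy
      exact (hd y hy).differentiableAt.differentiableWithinAt
    · rw [interior_Ioi] at hy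
      have hy' : 0 < y := hy
      rw [(hd y hy).deriv]
      have h1 : (y + a) ^ (α - 1 - 1) ≤ y ^ (α - 1 - 1) :=
        Real.rpow_le_rpow_of_nonpos hy' (by linarith) (by linarith)
      have h2 : Real.exp (-r * a) ≤ 1 := Real.exp_le_one_iff.2 (by nlinarith)
      have h3 : 0 < (y + a) ^ (α - 1 - 1) := by positivity
      have h4 : Real.exp (-r * a) * (y + a) ^ (α - 1 - 1) ≤ y ^ (α - 1 - 1) := by nlinarith
      nlinarith
  have hdanti : AntitoneOn (fun y : ℝ => y ^ (α - 1) * Real.exp (-r * y) -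
      (y + a) ^ (α - 1) * Real.exp (-r * (y + a))) (Set.Ioi 0) := by
    have heq : ∀ y : ℝ, y ^ (α - 1) * Real.exp (-r * y) -
      (y + a) ^ (α - 1) * Real.exp (-r * (y + a)) =
      (y ^ (α - 1) - Real.exp (-r * a) * (y + a) ^ (α - 1)) * Real.exp (-r * y) := by
      intro y
      rw [mul_add, Real.exp_add]; ring
    intro x hx y hy hxy
    have hx0 := hle x hx
    simp only
    rw [heq x, heq y]
    have hx1 : 0 ≤ x ^ (α - 1) - Real.exp (-r * a) * (x + a) ^ (α - 1) := by
      rw [← sub_nonneg, heq x] at hx0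
      exact nonneg_of_mul_nonneg_left hx0 (Real.exp_pos _)
    exact mul_le_mul (hu hx hy hxy) (Real.exp_le_exp.2 (by nlinarith)) (Real.exp_pos _).le hx1
  have hbdd : ∀ f : ℝ → ℝ, IntegrableOn f (Set.Ioi 0) →
      IntegrableOn (fun x => f x * Real.sin (b * x)) (Set.Ioi 0) := by
    intro f hf
    refine Integrable.mul_bdd (c := 1) hf (by fun_prop) ?_
    exact Filter.Eventually.of_forall fun x => by
      simpa using Real.abs_sin_le_one (b * x)
  have h1 := sine_integral_nonneg hb hh hhanti
  have h2 := sine_integral_nonneg hb (hf.sub hh) hdanti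
  simp only [Pi.sub_apply, sub_mul] at h2
  rw [integral_sub (hbdd _ hf) (hbdd _ hh)] at h2
  rw [abs_of_nonneg h1]
  have h3 := (le_abs_self _).trans (full_bound (α := α) hr hb hα0)
  linarith

/-- Oscillatory integral bound and summability: for `r > 1`, `g ≥ 1` and
`α ∈ (0,1)`, the truncated integral
`∫_{1/g}^∞ x^{α-1} e^{-rx} sin(2πkgx) dx` is bounded by `Γ(α)/(2πkg)^α` for each
integer `k ≥ 1`; consequently the series
`Σ_{k≥1} (1/(kπ)) ∫_0^∞ x^{α-1} e^{-rx} sin(2πkgx) dx` converges absolutely and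
its absolute value is at most `(Γ(α)/(π(2π)^α)) ζ(α+1) g^{-α}`. -/
theorem oscillatory_gamma_integral_bounds (r g α : ℝ) (hr : 1 < r) (hg : 1 ≤ g)
    (hα0 : 0 < α) (hα1 : α < 1) :
    (∀ k : ℕ, 1 ≤ k →
      |∫ x in Set.Ioi (1 / g),
          x ^ (α - 1) * Real.exp (-r * x) * Real.sin (2 * Real.pi * k * g * x)|
        ≤ Real.Gamma α / (2 * Real.pi * k * g) ^ α) ∧
    Summable (fun k : ℕ =>
      |(1 / (((k : ℝ) + 1) * Real.pi)) * ∫ x in Set.Ioi (0 : ℝ),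
          x ^ (α - 1) * Real.exp (-r * x) *
            Real.sin (2 * Real.pi * ((k : ℝ) + 1) * g * x)|) ∧
    |∑' k : ℕ, (1 / (((k : ℝ) + 1) * Real.pi)) * ∫ x in Set.Ioi (0 : ℝ),
          x ^ (α - 1) * Real.exp (-r * x) *
            Real.sin (2 * Real.pi * ((k : ℝ) + 1) * g * x)|
      ≤ Real.Gamma α / (Real.pi * (2 * Real.pi) ^ α) *
          (∑' n : ℕ, 1 / ((n : ℝ) + 1) ^ (α + 1)) * g ^ (-α) := by
  have hr0 : 0 < r := by linarith
  have hg0 : 0 < g := by linarith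
  have hterm : ∀ k : ℕ, ‖(1 / (((k : ℝ) + 1) * Real.pi)) * ∫ x in Set.Ioi (0 : ℝ),
      x ^ (α - 1) * Real.exp (-r * x) * Real.sin (2 * Real.pi * ((k : ℝ) + 1) * g * x)‖ ≤
      Real.Gamma α / (Real.pi * (2 * Real.pi) ^ α) * (1 / ((k : ℝ) + 1) ^ (α + 1)) * g ^ (-α) := by
    intro k
    have hk : (0 : ℝ) < (k : ℝ) + 1 := by positivity
    have hfb := full_bound (b := 2 * Real.pi * ((k : ℝ) + 1) * g) hr0 (by positivity) hα0
    rw [norm_mul, Real.norm_of_nonneg (by positivity), Real.norm_eq_abs]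
    refine (mul_le_mul_of_nonneg_left hfb (by positivity)).trans (le_of_eq ?_)
    rw [Real.mul_rpow (by positivity) hg0.le, Real.mul_rpow (by positivity) hk.le,
      Real.rpow_add hk, Real.rpow_one, Real.rpow_neg hg0.le]
    field_simp
  have hsum : Summable (fun n : ℕ => 1 / ((n : ℝ) + 1) ^ (α + 1)) := by
    have := (Real.summable_one_div_nat_add_rpow 1 (α + 1)).2 (by linarith)
    refine this.congr fun n => ?_
    rw [abs_of_pos (by positivity)]
  have hS := (hsum.hasSum.mul_left (Real.Gamma α / (Real.pi * (2 * Real.pi) ^ α))).mul_right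
    (g ^ (-α))
  refine ⟨fun k hk => ?_, ?_, ?_⟩
  · have hk0 : (0 : ℝ) < k := by exact_mod_cast hk
    exact trunc_bound hr0 (by positivity) hα0 hα1 (by positivity) k (by field_simp)
  · exact Summable.of_nonneg_of_le (fun _ => abs_nonneg _) hterm hS.summable
  · exact tsum_of_norm_bounded hS hterm
end
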